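/- Let f: ℝ → [0,∞) be a nondecreasing right-continuous function vanishing on (−∞,0), and suppose that the function ε(t) := f(t) − a·t, t ≥ 0, for some a > 0, satisfies ∫_{[0,∞)} y |dε(y)| < ∞, where |dε| denotes the total variation measure of ε. Then γ₀ := lim_{t→∞}(f(t) − a·t) exists and is finite, and for every integer-valued function j = j(t) ≥ 1 such that j(t) = o(t^{2/3}) as t → ∞, the convolution powers satisfy f^{∗(j(t))}(t) ~ (a^{j(t)}·t^{j(t)}/j(t)!)·exp(γ₀·j(t)²/(a·t)) as t → ∞. -/

import Mathlib

open MeasureTheory Filter Set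
open scoped ENNReal NNReal Topology

noncomputable section

/-- `j`-fold convolution power of a measure on `ℝ` (Dirac mass at `0` for `j = 0`). -/
def convPow (μ : Measure ℝ) : ℕ → Measure ℝ
  | 0 => Measure.dirac 0
  | n + 1 => Measure.map (fun p : ℝ × ℝ => p.1 + p.2) ((convPow μ n).prod μ)

open Classical in
/-- The Lebesgue–Stieltjes measure of a monotone function (junk value `0` otherwise). -/
def lsMeasure (f : ℝ → ℝ) : Measure ℝ :=
  if hf : Monotone f then hf.stieltjesFunction.measure else 0

/-- The `j`-fold Lebesgue–Stieltjes convolution power `f^{∗(j)}(t)` of a nondecreasing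
right-continuous function `f` vanishing on the negative half-line. -/
def convPowFun (f : ℝ → ℝ) (j : ℕ) (t : ℝ) : ℝ :=
  ((convPow (lsMeasure f) j) (Iic t)).toReal

/-- The measure with density `a` on `(-c, ∞)`, whose distribution function is `a (t + c)⁺`. -/
def halfLineMeasure (a c : ℝ) : Measure ℝ := ENNReal.ofReal a • volume.restrict (Ioi (-c))

instance (a c : ℝ) : SFinite (halfLineMeasure a c) := by
  unfold halfLineMeasure; infer_instance

instance (f : ℝ → ℝ) : SFinite (lsMeasure f) := by
  unfold lsMeasure; split_ifs <;> infer_instance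

theorem convPow_succ (μ : Measure ℝ) (n : ℕ) : convPow μ (n + 1) = (convPow μ n).conv μ := rfl

instance sfinite_convPow (μ : Measure ℝ) [SFinite μ] : ∀ n, SFinite (convPow μ n)
  | 0 => by unfold convPow; infer_instance
  | n + 1 => by
    have := sfinite_convPow μ n
    rw [convPow_succ]; infer_instance

theorem conv_Iic (μ ν : Measure ℝ) [SFinite ν] (t : ℝ) :
    (μ.conv ν) (Iic t) = ∫⁻ x, ν (Iic (t - x)) ∂μ := by
  rw [← lintegral_indicator_one measurableSet_Iic,
    Measure.lintegral_conv (measurable_one.indicator measurableSet_Iic)]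
  refine lintegral_congr fun x => ?_
  rw [← lintegral_indicator_one measurableSet_Iic]
  refine lintegral_congr fun y => ?_
  simp only [indicator, mem_Iic, le_sub_iff_add_le', Pi.one_apply]

theorem measurable_measure_Iic (μ : Measure ℝ) : Measurable fun v => μ (Iic v) :=
  Monotone.measurable fun _ _ h => measure_mono (Iic_subset_Iic.2 h)

theorem conv_halfLineMeasure_Iic (a c : ℝ) (μ : Measure ℝ) [SFinite μ] (u : ℝ) :
    (μ.conv (halfLineMeasure a c)) (Iic u)
      = ENNReal.ofReal a * ∫⁻ v in Iio (u + c), μ (Iic v) := by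
  rw [Measure.conv_comm, conv_Iic, halfLineMeasure, lintegral_smul_measure, smul_eq_mul]
  congr 1
  rw [← lintegral_indicator measurableSet_Ioi, ← lintegral_indicator measurableSet_Iio,
    ← lintegral_sub_left_eq_self _ u]
  refine lintegral_congr fun y => ?_
  have hiff : -c < u - y ↔ y < u + c := by constructor <;> intro h <;> linarith
  simp only [indicator, mem_Iio, mem_Ioi, sub_sub_cancel, hiff]

theorem halfLineMeasure_Iic {a : ℝ} (ha : 0 ≤ a) (c v : ℝ) :
    halfLineMeasure a c (Iic v) = ENNReal.ofReal (a * max (v + c) 0) := by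
  rw [halfLineMeasure, Measure.smul_apply, Measure.restrict_apply measurableSet_Iic,
    inter_comm, Ioi_inter_Iic, Real.volume_Ioc, smul_eq_mul, ENNReal.ofReal_mul ha]
  congr 1
  rcases le_total (v + c) 0 with h | h
  · rw [max_eq_right h, ENNReal.ofReal_of_nonpos (by linarith), ENNReal.ofReal_zero]
  · rw [max_eq_left h, sub_neg_eq_add]

theorem lintegral_Iio_pow_max (m : ℕ) (b x : ℝ) (k : ℝ) (hk : 0 ≤ k) :
    ∫⁻ v in Iio x, ENNReal.ofReal (k * max (v + b) 0 ^ (m + 1))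
      = ENNReal.ofReal (k * max (x + b) 0 ^ (m + 2) / (m + 2)) := by
  have hsplit : ∫⁻ v in Iio x, ENNReal.ofReal (k * max (v + b) 0 ^ (m + 1))
      = ∫⁻ v in Ioc (-b) x, ENNReal.ofReal (k * (v + b) ^ (m + 1)) := by
    rw [setLIntegral_congr Iio_ae_eq_Iic, ← lintegral_indicator measurableSet_Iic,
      ← lintegral_indicator measurableSet_Ioc]
    refine lintegral_congr fun v => ?_
    simp only [indicator, mem_Iic, mem_Ioc]
    rcases le_or_gt v (-b) with h | h
    · have : max (v + b) 0 = 0 := max_eq_right (by linarith)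
      simp [this, not_lt.2 h]
    · have : max (v + b) 0 = v + b := max_eq_left (by linarith)
      simp [this, h]
  rw [hsplit]
  rcases le_total x (-b) with h | h
  · rw [Ioc_eq_empty (not_lt.2 h), max_eq_right (by linarith)]
    simp
  · rw [max_eq_left (by linarith), ← ofReal_integral_eq_lintegral_ofReal,
      ← intervalIntegral.integral_of_le h, intervalIntegral.integral_const_mul,
      intervalIntegral.integral_comp_add_right (fun v => v ^ (m + 1)), integral_pow]
    · congr 1
      push_cast
      simp
      ring
    · exact (Continuous.integrableOn_Ioc (by fun_prop))
    · refine (ae_restrict_mem measurableSet_Ioc).mono fun v hv => ?_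
      have : 0 ≤ v + b := by linarith [hv.1]
      positivity

theorem convPow_halfLineMeasure_Iic {a : ℝ} (ha : 0 ≤ a) (c : ℝ) (n : ℕ) (s : ℝ) :
    convPow (halfLineMeasure a c) (n + 1) (Iic s)
      = ENNReal.ofReal (a ^ (n + 1) / (n + 1).factorial *
          max (s + (n + 1 : ℕ) * c) 0 ^ (n + 1)) := by
  induction n generalizing s with
  | zero =>
    rw [convPow_succ, convPow, Measure.dirac_zero_conv, halfLineMeasure_Iic ha]
    simp
  | succ n ih =>
    rw [convPow_succ, conv_halfLineMeasure_Iic]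
    simp_rw [ih]
    rw [lintegral_Iio_pow_max _ _ _ _ (by positivity), ← ENNReal.ofReal_mul ha]
    congr 1
    rw [Nat.factorial_succ (n + 1)]
    push_cast
    rw [show s + c + (n + 1) * c = s + (n + 1 + 1) * c by ring]
    field_simp
    ring

theorem lintegral_indicator_Ici_sub (ν : Measure ℝ) (k : ℝ≥0∞) (d t : ℝ) :
    ∫⁻ x, (Ici (-d)).indicator (fun _ => k) (t - x) ∂ν = k * ν (Iic (t + d)) := by
  rw [← lintegral_indicator_const measurableSet_Iic]
  refine lintegral_congr fun x => ?_
  simp only [indicator, mem_Ici, mem_Iic]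
  congr 1
  rw [neg_le_sub_iff_le_add, eq_iff_iff]

theorem conv_Iic_le_of_forall_le {μ κ : Measure ℝ} [SFinite μ] [SFinite κ]
    {k : ℝ≥0∞} {d : ℝ} (h : ∀ v, μ (Iic v) ≤ κ (Iic v) + (Ici (-d)).indicator (fun _ => k) v)
    (ν : Measure ℝ) (t : ℝ) :
    (ν.conv μ) (Iic t) ≤ (ν.conv κ) (Iic t) + k * ν (Iic (t + d)) := by
  rw [conv_Iic, conv_Iic, ← lintegral_indicator_Ici_sub, ← lintegral_add_left]
  · exact lintegral_mono fun x => h _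
  · exact (measurable_measure_Iic κ).comp (measurable_const.sub measurable_id)

theorem conv_halfLineMeasure_Iic_le {μ κ : Measure ℝ} [SFinite μ] [SFinite κ] {a c d : ℝ}
    {e : ℝ → ℝ≥0∞} (h : ∀ v, μ (Iic v) ≤ κ (Iic v) + e v)
    (he : ∀ v, v < c - d → e v = 0) (u : ℝ) :
    (μ.conv (halfLineMeasure a c)) (Iic u) ≤ (κ.conv (halfLineMeasure a c)) (Iic u)
      + (Ici (-d)).indicator (fun _ => ENNReal.ofReal a * ∫⁻ v, e v) u := by
  rw [conv_halfLineMeasure_Iic, conv_halfLineMeasure_Iic]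
  have key : ∫⁻ v in Iio (u + c), μ (Iic v)
      ≤ (∫⁻ v in Iio (u + c), κ (Iic v)) + ∫⁻ v in Iio (u + c), e v := by
    rw [← lintegral_add_left (measurable_measure_Iic κ)]
    exact lintegral_mono h
  calc _ ≤ _ := mul_le_mul_right key (ENNReal.ofReal a)
    _ = _ := mul_add _ _ _
    _ ≤ _ := by
      gcongr
      rcases lt_or_ge u (-d) with hu | hu
      · rw [setLIntegral_congr_fun measurableSet_Iio 
          (fun v hv => he v (by linarith [mem_Iio.1 hv]))]
        simp
      · rw [indicator_of_mem (mem_Ici.2 hu)]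
        gcongr
        exact Measure.restrict_le_self

theorem lsMeasure_Iic {f : ℝ → ℝ} (hmono : Monotone f)
    (hrc : ∀ x, ContinuousWithinAt f (Ici x) x) (hneg : ∀ t < (0 : ℝ), f t = 0) (t : ℝ) :
    lsMeasure f (Iic t) = ENNReal.ofReal (f t) := by
  have hval : ∀ x, hmono.stieltjesFunction x = f x := fun x => by
    rw [hmono.stieltjesFunction_eq]
    exact hmono.continuousWithinAt_Ioi_iff_rightLim_eq.1 ((hrc x).mono Ioi_subset_Ici_self)
  have hbot : Tendsto hmono.stieltjesFunction atBot (𝓝 0) := by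
    refine tendsto_const_nhds.congr' ?_
    filter_upwards [eventually_lt_atBot (0 : ℝ)] with x hx
    rw [hval, hneg x hx]
  rw [lsMeasure, dif_pos hmono, StieltjesFunction.measure_Iic _ hbot, hval, sub_zero]

theorem lintegral_Ioi_measure_Ioi (ρ : Measure ℝ) :
    ∫⁻ v in Ioi 0, ρ (Ioi v) = ∫⁻ y, ENNReal.ofReal y ∂ρ := by
  have h := lintegral_eq_lintegral_meas_lt ρ (f := fun y => max y 0)
    (Eventually.of_forall fun y => le_max_right y 0) (by fun_prop)
  have hmax : ∀ y : ℝ, ENNReal.ofReal (max y 0) = ENNReal.ofReal y := fun y => by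
    simp
  simp only [hmax] at h
  rw [h]
  refine setLIntegral_congr_fun measurableSet_Ioi fun v hv => ?_
  congr 1
  ext y
  simp [(mem_Ioi.1 hv).not_gt]

theorem exists_tendsto_sub_linear_and_integrable_remainder
    (f : ℝ → ℝ) (hf0 : ∀ t, 0 ≤ f t) (hmono : Monotone f)
    (hrc : ∀ x, ContinuousWithinAt f (Ici x) x)
    (hneg : ∀ t < (0 : ℝ), f t = 0)
    (a : ℝ) (ha : 0 < a)
    (ρ₁ ρ₂ : Measure ℝ) [IsFiniteMeasure ρ₁] [IsFiniteMeasure ρ₂]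
    (hρ : lsMeasure f + ρ₂ = ρ₁ + ENNReal.ofReal a • volume.restrict (Ioi 0))
    (hρ₁ : (∫⁻ y, ENNReal.ofReal y ∂ρ₁) < ⊤) (hρ₂ : (∫⁻ y, ENNReal.ofReal y ∂ρ₂) < ⊤) :
    ∃ γ₀ : ℝ, Tendsto (fun t : ℝ => f t - a * t) atTop (𝓝 γ₀) ∧
      (∃ V, ∀ v, |f v - a * max (v + γ₀ / a) 0| ≤ V) ∧
      (∫⁻ v, ENNReal.ofReal |f v - a * max (v + γ₀ / a) 0|) < ⊤ := by
  set γ₀ := ρ₁.real univ - ρ₂.real univ with hγ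
  set c := γ₀ / a with hc
  have hac : a * c = γ₀ := by rw [hc]; field_simp
  have hval : ∀ t, 0 ≤ t → f t = a * t + γ₀ - ρ₁.real (Ioi t) + ρ₂.real (Ioi t) := by
    intro t ht
    have h := congrArg (fun m : Measure ℝ => (m (Iic t)).toReal) hρ
    simp only [Measure.add_apply, Measure.smul_apply, smul_eq_mul,
      Measure.restrict_apply measurableSet_Iic, lsMeasure_Iic hmono hrc hneg] at h
    rw [inter_comm, Ioi_inter_Iic, Real.volume_Ioc, ← ENNReal.ofReal_mul ha.le,
      ENNReal.toReal_add ENNReal.ofReal_ne_top (measure_ne_top _ _),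
      ENNReal.toReal_add (measure_ne_top _ _) ENNReal.ofReal_ne_top,
      ENNReal.toReal_ofReal (hf0 t), ENNReal.toReal_ofReal (by nlinarith)] at h
    have h₁ := measureReal_add_measureReal_compl (μ := ρ₁) (measurableSet_Iic (a := t))
    have h₂ := measureReal_add_measureReal_compl (μ := ρ₂) (measurableSet_Iic (a := t))
    rw [compl_Iic] at h₁ h₂
    simp only [Measure.real] at h₁ h₂ hγ ⊢
    linarith
  have htail : ∀ ρ : Measure ℝ, IsFiniteMeasure ρ →
      Tendsto (fun t => ρ.real (Ioi t)) atTop (𝓝 0) := by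
    intro ρ _
    have h := (ENNReal.tendsto_toReal (measure_ne_top ρ univ)).comp (tendsto_measure_Iic_atTop ρ)
    have h' : Tendsto (fun t => ρ.real univ - ρ.real (Iic t)) atTop
        (𝓝 (ρ.real univ - ρ.real univ)) := tendsto_const_nhds.sub h
    rw [sub_self] at h'
    refine h'.congr fun t => ?_
    have := measureReal_add_measureReal_compl (μ := ρ) (measurableSet_Iic (a := t))
    rw [compl_Iic] at this
    linarith
  have hlow : ∀ v, v < -|c| → f v - a * max (v + c) 0 = 0 := by
    intro v hv
    have h0 := abs_nonneg c
    rw [hneg v (by linarith), max_eq_right (by linarith [le_abs_self c])]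
    simp
  have hhigh : ∀ v, |c| < v →
      |f v - a * max (v + c) 0| ≤ ρ₁.real (Ioi v) + ρ₂.real (Ioi v) := by
    intro v hv
    rw [hval v ((abs_nonneg c).trans hv.le), max_eq_left (by linarith [neg_abs_le c]), mul_add, hac]
    have h₁ : 0 ≤ ρ₁.real (Ioi v) := measureReal_nonneg
    have h₂ : 0 ≤ ρ₂.real (Ioi v) := measureReal_nonneg
    rw [abs_le]
    constructor <;> linarith
  have hmid : ∀ v, -|c| ≤ v → v ≤ |c| → |f v - a * max (v + c) 0| ≤ f |c| + a * (2 * |c|) := by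
    intro v _ hv
    have h₁ := hmono hv
    have h₂ := hf0 v
    have h₃ : a * max (v + c) 0 ≤ a * (2 * |c|) := by
      gcongr
      exact max_le (by linarith [le_abs_self c]) (by positivity)
    have h₄ : 0 ≤ a * max (v + c) 0 := mul_nonneg ha.le (le_max_right _ _)
    rw [abs_le]
    constructor <;> linarith
  refine ⟨γ₀, ?_, ⟨f |c| + a * (2 * |c|) + ρ₁.real univ + ρ₂.real univ, ?_⟩, ?_⟩
  · have h := ((htail ρ₂ inferInstance).sub (htail ρ₁ inferInstance)).const_add γ₀
    simp only [sub_zero, add_zero] at h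
    refine h.congr' ?_
    filter_upwards [eventually_ge_atTop 0] with t ht
    rw [hval t ht]
    ring
  · intro v
    have h₁ : 0 ≤ ρ₁.real univ := measureReal_nonneg
    have h₂ : 0 ≤ ρ₂.real univ := measureReal_nonneg
    have h₃ : 0 ≤ f |c| + a * (2 * |c|) := add_nonneg (hf0 _) (by positivity)
    rcases lt_or_ge v (-|c|) with hv | hv
    · rw [hlow v hv, abs_zero]
      linarith
    rcases le_or_gt v |c| with hv' | hv'
    · linarith [hmid v hv hv']
    · have h₄ : ρ₁.real (Ioi v) ≤ ρ₁.real univ := measureReal_mono (subset_univ _)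
      have h₅ : ρ₂.real (Ioi v) ≤ ρ₂.real univ := measureReal_mono (subset_univ _)
      linarith [hhigh v hv']
  · have hle : ∀ v, ENNReal.ofReal |f v - a * max (v + c) 0| ≤
        (Icc (-|c|) |c|).indicator (fun _ => ENNReal.ofReal (f |c| + a * (2 * |c|))) v
          + (Ioi 0).indicator (fun v => ρ₁ (Ioi v) + ρ₂ (Ioi v)) v := by
      intro v
      rcases lt_or_ge v (-|c|) with hv | hv
      · rw [hlow v hv]
        simp
      rcases le_or_gt v |c| with hv' | hv'
      · rw [indicator_of_mem (show v ∈ Icc (-|c|) |c| from ⟨hv, hv'⟩)]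
        exact (ENNReal.ofReal_le_ofReal (hmid v hv hv')).trans le_self_add
      · rw [indicator_of_mem (show v ∈ Ioi 0 from (abs_nonneg c).trans_lt hv')]
        refine le_trans ?_ le_add_self
        refine (ENNReal.ofReal_le_ofReal (hhigh v hv')).trans ?_
        rw [ENNReal.ofReal_add measureReal_nonneg measureReal_nonneg,
          ofReal_measureReal, ofReal_measureReal]
    refine (lintegral_mono hle).trans_lt ?_
    have hmeas : ∀ ρ : Measure ℝ, Measurable fun v => ρ (Ioi v) := fun ρ =>
      Antitone.measurable fun _ _ h => measure_mono (Ioi_subset_Ioi h)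
    rw [lintegral_add_left (measurable_const.indicator measurableSet_Icc),
      lintegral_indicator measurableSet_Ioi, lintegral_add_left (hmeas ρ₁),
      lintegral_Ioi_measure_Ioi, lintegral_Ioi_measure_Ioi,
      lintegral_indicator_const measurableSet_Icc, Real.volume_Icc]
    exact ENNReal.add_lt_top.2 ⟨ENNReal.mul_lt_top ENNReal.ofReal_lt_top ENNReal.ofReal_lt_top,
      ENNReal.add_lt_top.2 ⟨hρ₁, hρ₂⟩⟩

/-- The distribution function of the convolution of `i` copies of `μ` and `m` copies of `κ`. -/
def mixedDist (μ κ : Measure ℝ) (i m : ℕ) (t : ℝ) : ℝ≥0∞ :=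
  ((convPow μ i).conv (convPow κ m)) (Iic t)

theorem mixedDist_zero_right (μ κ : Measure ℝ) [SFinite μ] (i : ℕ) (t : ℝ) :
    mixedDist μ κ i 0 t = convPow μ i (Iic t) := by
  rw [mixedDist, convPow, Measure.conv_dirac_zero]

theorem mixedDist_zero_left (μ κ : Measure ℝ) [SFinite κ] (m : ℕ) (t : ℝ) :
    mixedDist μ κ 0 m t = convPow κ m (Iic t) := by
  rw [mixedDist, convPow, Measure.dirac_zero_conv]

theorem convPow_succ_conv_convPow_succ (μ κ : Measure ℝ) [SFinite μ] [SFinite κ] (i m : ℕ) :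
    (convPow μ (i + 1)).conv (convPow κ (m + 1))
      = ((convPow μ i).conv (convPow κ m)).conv (μ.conv κ) := by
  rw [convPow_succ, convPow_succ, Measure.conv_assoc, Measure.conv_assoc,
    ← Measure.conv_assoc μ, Measure.conv_comm μ, Measure.conv_assoc]

theorem convPow_conv_convPow_add_two (μ κ : Measure ℝ) [SFinite μ] [SFinite κ] (i m : ℕ) :
    (convPow μ i).conv (convPow κ (m + 2))
      = ((convPow μ i).conv (convPow κ m)).conv (κ.conv κ) := by
  rw [convPow_succ, convPow_succ, Measure.conv_assoc, Measure.conv_assoc]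

theorem toReal_sub_abs_le {x y z : ℝ≥0∞} (hx : x ≠ ⊤) (hy : y ≠ ⊤) (hz : z ≠ ⊤)
    (hxy : x ≤ y + z) (hyx : y ≤ x + z) : |x.toReal - y.toReal| ≤ z.toReal := by
  have h₁ := ENNReal.toReal_mono (ENNReal.add_ne_top.2 ⟨hy, hz⟩) hxy
  have h₂ := ENNReal.toReal_mono (ENNReal.add_ne_top.2 ⟨hx, hz⟩) hyx
  rw [ENNReal.toReal_add hy hz] at h₁
  rw [ENNReal.toReal_add hx hz] at h₂
  rw [abs_le]
  constructor <;> linarith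

theorem exists_mixedDist_exchange_bounds {μ : Measure ℝ} [SFinite μ] {f : ℝ → ℝ} {a c V : ℝ}
    (ha : 0 ≤ a) (hf0 : ∀ t, 0 ≤ f t) (hμ : ∀ t, μ (Iic t) = ENNReal.ofReal (f t))
    (hneg : ∀ t < (0 : ℝ), f t = 0) (hV : ∀ v, |f v - a * max (v + c) 0| ≤ V)
    (hI : (∫⁻ v, ENNReal.ofReal |f v - a * max (v + c) 0|) < ⊤) :
    ∃ K W d : ℝ, 0 ≤ K ∧ 0 ≤ W ∧ 0 ≤ d ∧
      (∀ i m t, |(mixedDist μ (halfLineMeasure a c) (i + 1) (m + 1) t).toReal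
          - (mixedDist μ (halfLineMeasure a c) i (m + 2) t).toReal|
        ≤ K * (mixedDist μ (halfLineMeasure a c) i m (t + d)).toReal) ∧
      (∀ i t, |(mixedDist μ (halfLineMeasure a c) (i + 1) 0 t).toReal
          - (mixedDist μ (halfLineMeasure a c) i 1 t).toReal|
        ≤ W * (mixedDist μ (halfLineMeasure a c) i 0 (t + d)).toReal) := by
  set η := halfLineMeasure a c
  set e : ℝ → ℝ≥0∞ := fun v => ENNReal.ofReal |f v - a * max (v + c) 0| with he
  set d := 2 * |c|
  have h0 : 0 ≤ V := (abs_nonneg _).trans (hV 0)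
  have he0 : ∀ v, v < -|c| → e v = 0 := by
    intro v hv
    have := abs_nonneg c
    simp only [he]
    rw [hneg v (by linarith), max_eq_right (by linarith [le_abs_self c])]
    simp
  have hlt : ∀ v, v < c - d → e v = 0 := fun v hv =>
    he0 v (by simp only [d] at hv; linarith [le_abs_self c])
  have heV : ∀ v, e v ≤ (Ici (-d)).indicator (fun _ => ENNReal.ofReal V) v := by
    intro v
    rcases lt_or_ge v (-d) with hv | hv
    · rw [he0 v (by simp only [d] at hv; linarith [abs_nonneg c])]
      exact zero_le
    · rw [indicator_of_mem (mem_Ici.2 hv)]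
      exact ENNReal.ofReal_le_ofReal (hV v)
  have hμη : ∀ v, μ (Iic v) ≤ η (Iic v) + e v := by
    intro v
    rw [hμ, halfLineMeasure_Iic ha, ← ENNReal.ofReal_add
      (mul_nonneg ha (le_max_right _ _)) (abs_nonneg _)]
    exact ENNReal.ofReal_le_ofReal (by linarith [le_abs_self (f v - a * max (v + c) 0)])
  have hημ : ∀ v, η (Iic v) ≤ μ (Iic v) + e v := by
    intro v
    rw [hμ, halfLineMeasure_Iic ha, ← ENNReal.ofReal_add (hf0 v) (abs_nonneg _)]
    exact ENNReal.ofReal_le_ofReal (by linarith [neg_abs_le (f v - a * max (v + c) 0)])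
  set K : ℝ≥0∞ := ENNReal.ofReal a * ∫⁻ v, e v
  have hK : K ≠ ⊤ := ENNReal.mul_ne_top ENNReal.ofReal_ne_top hI.ne
  have A₁ : ∀ i m t, mixedDist μ η (i + 1) (m + 1) t
      ≤ mixedDist μ η i (m + 2) t + K * mixedDist μ η i m (t + d) := fun i m t => by
    simp only [mixedDist]
    rw [convPow_succ_conv_convPow_succ, convPow_conv_convPow_add_two]
    exact conv_Iic_le_of_forall_le (conv_halfLineMeasure_Iic_le hμη hlt) _ t
  have A₂ : ∀ i m t, mixedDist μ η i (m + 2) t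
      ≤ mixedDist μ η (i + 1) (m + 1) t + K * mixedDist μ η i m (t + d) := fun i m t => by
    simp only [mixedDist]
    rw [convPow_succ_conv_convPow_succ, convPow_conv_convPow_add_two]
    exact conv_Iic_le_of_forall_le (conv_halfLineMeasure_Iic_le hημ hlt) _ t
  have hone : ∀ i, (convPow μ i).conv (convPow η 1) = (convPow μ i).conv η := fun i => by
    rw [convPow_succ, convPow, Measure.dirac_zero_conv]
  have B₁ : ∀ i t, mixedDist μ η (i + 1) 0 t
      ≤ mixedDist μ η i 1 t + ENNReal.ofReal V * mixedDist μ η i 0 (t + d) := fun i t => by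
    rw [mixedDist_zero_right, mixedDist_zero_right, mixedDist, hone, convPow_succ]
    exact conv_Iic_le_of_forall_le
      (fun v => (hμη v).trans (add_le_add_right (heV v) _)) _ t
  have B₂ : ∀ i t, mixedDist μ η i 1 t
      ≤ mixedDist μ η (i + 1) 0 t + ENNReal.ofReal V * mixedDist μ η i 0 (t + d) := fun i t => by
    rw [mixedDist_zero_right, mixedDist_zero_right, mixedDist, hone, convPow_succ]
    exact conv_Iic_le_of_forall_le
      (fun v => (hημ v).trans (add_le_add_right (heV v) _)) _ t
  have hfin : ∀ i m t, mixedDist μ η i m t ≠ ⊤ := by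
    intro i
    induction i with
    | zero =>
      rintro (_ | m) t
      · rw [mixedDist_zero_left, convPow]
        exact measure_ne_top _ _
      · rw [mixedDist_zero_left, convPow_halfLineMeasure_Iic ha]
        exact ENNReal.ofReal_ne_top
    | succ i ih =>
      rintro (_ | m) t
      · exact ne_top_of_le_ne_top (ENNReal.add_ne_top.2
          ⟨ih _ _, ENNReal.mul_ne_top ENNReal.ofReal_ne_top (ih _ _)⟩) (B₁ i t)
      · exact ne_top_of_le_ne_top (ENNReal.add_ne_top.2
          ⟨ih _ _, ENNReal.mul_ne_top hK (ih _ _)⟩) (A₁ i m t)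
  refine ⟨K.toReal, V, d, ENNReal.toReal_nonneg, h0, by positivity, fun i m t => ?_,
    fun i t => ?_⟩
  · rw [← ENNReal.toReal_mul]
    exact toReal_sub_abs_le (hfin _ _ _) (hfin _ _ _) (ENNReal.mul_ne_top hK (hfin _ _ _))
      (A₁ i m t) (A₂ i m t)
  · have h := toReal_sub_abs_le (hfin _ _ _) (hfin _ _ _)
      (ENNReal.mul_ne_top ENNReal.ofReal_ne_top (hfin _ _ _)) (B₁ i t) (B₂ i t)
    rwa [ENNReal.toReal_mul, ENNReal.toReal_ofReal h0] at h

/-- If exchanging one factor costs a controlled amount, and the reference sequence `H` loses a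
factor `b` when its index drops by one, then every mixed term is uniformly close to `H`. -/
theorem abs_mixed_sub_le_of_exchange_bounds {g : ℕ → ℕ → ℝ → ℝ} {H : ℕ → ℝ → ℝ}
    {K W d b q T : ℝ} {N : ℕ} (hK : 0 ≤ K) (hW : 0 ≤ W) (hd : 0 ≤ d) (hb : 0 ≤ b)
    (hmix : ∀ i m s, |g (i + 1) (m + 1) s - g i (m + 2) s| ≤ K * g i m (s + d))
    (hlast : ∀ i s, |g (i + 1) 0 s - g i 1 s| ≤ W * g i 0 (s + d))
    (hzero : ∀ m s, T ≤ s → g 0 m s = H m s)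
    (hH0 : ∀ n s, 0 ≤ H n s) (hHmono : ∀ n s, T ≤ s → H n s ≤ H n (s + d))
    (hHb : ∀ n s, n + 1 ≤ N → T ≤ s → H n (s + d) ≤ b * H (n + 1) s)
    (hq : 2 * K * b ^ 2 * N + 2 * W * b ≤ q) (hq1 : q ≤ 1) :
    ∀ n ≤ N, ∀ i m, i + m = n → ∀ s, T ≤ s → |g i m s - H n s| ≤ q * H n s := by
  intro n
  induction n using Nat.strong_induction_on with
  | _ n IH =>
  intro hn
  have hdouble : ∀ k < n, ∀ i m, i + m = k → ∀ s, T ≤ s → g i m s ≤ 2 * H k s := by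
    intro k hk i m him s hs
    have h := (abs_le.1 (IH k hk (hk.le.trans hn) i m him s hs)).2
    nlinarith [hH0 k s]
  have hKb : 0 ≤ 2 * K * b ^ 2 := by positivity
  have hstep : ∀ i m, i + (m + 1) = n → ∀ s, T ≤ s →
      |g i (m + 1) s - H n s| ≤ 2 * K * b ^ 2 * i * H n s := by
    intro i
    induction i with
    | zero =>
      intro m hm s hs
      rw [hzero _ _ hs, show m + 1 = n by omega]
      simp
    | succ i ih =>
      intro m hm s hs
      have hs' : T ≤ s + d := by linarith
      have h₁ := ih (m + 1) (by omega) s hs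
      have h₂ := hmix i m s
      have h₃ := hdouble (i + m) (by omega) i m rfl (s + d) hs'
      have h₄ : H (i + m) (s + d) ≤ b ^ 2 * H n s :=
        calc H (i + m) (s + d) ≤ b * H (i + m + 1) s := hHb _ _ (by omega) hs
          _ ≤ b * H (i + m + 1) (s + d) := by gcongr; exact hHmono _ _ hs
          _ ≤ b * (b * H (i + m + 1 + 1) s) := by gcongr; exact hHb _ _ (by omega) hs
          _ = b ^ 2 * H n s := by rw [show i + m + 1 + 1 = n by omega]; ring
      have h₅ : K * g i m (s + d) ≤ K * (2 * (b ^ 2 * H n s)) := by gcongr; linarith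
      calc |g (i + 1) (m + 1) s - H n s|
          ≤ |g (i + 1) (m + 1) s - g i (m + 2) s| + |g i (m + 2) s - H n s| := abs_sub_le _ _ _
        _ ≤ K * (2 * (b ^ 2 * H n s)) + 2 * K * b ^ 2 * i * H n s :=
            add_le_add (h₂.trans h₅) h₁
        _ = _ := by push_cast; ring
  have hbound : ∀ i : ℕ, i ≤ n → ∀ s, 2 * K * b ^ 2 * i * H n s ≤ 2 * K * b ^ 2 * N * H n s := by
    intro i hi s
    have : (i : ℝ) ≤ N := by exact_mod_cast hi.trans hn
    have := hH0 n s
    gcongr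
  have hWb : ∀ s, 0 ≤ 2 * W * b * H n s := fun s => mul_nonneg (by positivity) (hH0 n s)
  have hqH : ∀ s, (2 * K * b ^ 2 * N + 2 * W * b) * H n s ≤ q * H n s := fun s =>
    mul_le_mul_of_nonneg_right hq (hH0 n s)
  rintro i (_ | m) him s hs
  · rcases i with _ | i
    · have hq0 : 0 ≤ q := le_trans (by positivity) hq
      rw [hzero _ _ hs, show n = 0 by omega, sub_self, abs_zero]
      exact mul_nonneg hq0 (hH0 _ _)
    · have h₁ := hstep i 0 (by omega) s hs
      have h₂ := hlast i s
      have h₃ := hdouble i (by omega) i 0 rfl (s + d) (by linarith)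
      have h₄ : H i (s + d) ≤ b * H n s := by
        have := hHb i s (by omega) hs
        rwa [show i + 1 = n by omega] at this
      have h₅ : W * g i 0 (s + d) ≤ W * (2 * (b * H n s)) := by gcongr; linarith
      have h₆ := abs_sub_le (g (i + 1) 0 s) (g i 1 s) (H n s)
      have h₇ := hbound i (by omega) s
      have h₈ := hqH s
      simp only [zero_add] at h₁
      linarith
  · have h₁ := hstep i m him s hs
    have h₂ := hbound i (by omega) s
    linarith [hqH s, hWb s]

/-- The function `aⁿ ((s + n c)⁺)ⁿ / n!`, the `n`-th convolution power of `a (s + c)⁺`. -/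
def shiftedPower (a c : ℝ) (n : ℕ) (s : ℝ) : ℝ :=
  a ^ n / n.factorial * max (s + n * c) 0 ^ n

theorem shiftedPower_nonneg {a : ℝ} (ha : 0 ≤ a) (c : ℝ) (n : ℕ) (s : ℝ) :
    0 ≤ shiftedPower a c n s := by
  unfold shiftedPower; positivity

theorem shiftedPower_mono {a : ℝ} (ha : 0 ≤ a) (c : ℝ) (n : ℕ) : Monotone (shiftedPower a c n) := by
  intro s t h
  unfold shiftedPower
  gcongr

theorem shiftedPower_add_le {a c d T : ℝ} {N : ℕ} (ha : 0 < a) (hd : 0 ≤ d) (hT : 0 < T)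
    (hN : 2 * N * (d + |c|) ≤ T) (n : ℕ) (s : ℝ) (hn : n + 1 ≤ N) (hs : T ≤ s) :
    shiftedPower a c n (s + d) ≤ 2 * Real.exp 1 / a * (N / T) * shiftedPower a c (n + 1) s := by
  have hnN : (n : ℝ) + 1 ≤ N := by exact_mod_cast hn
  have hn0 : (0 : ℝ) ≤ n := n.cast_nonneg
  have hc0 := abs_nonneg c
  have hNc : (N : ℝ) * (d + |c|) ≤ T / 2 := by linarith
  have hNd : (0 : ℝ) ≤ N * d := by positivity
  set x := s + (n + 1) * c with hx
  have hcx : -((N : ℝ) * |c|) ≤ (n + 1) * c := by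
    have h₁ : ((n : ℝ) + 1) * |c| ≤ N * |c| := by gcongr
    have h₂ : ((n : ℝ) + 1) * (-|c|) ≤ (n + 1) * c := by gcongr; exact neg_abs_le c
    linarith
  have hxT : T / 2 ≤ x := by rw [hx]; linarith
  have hx0 : 0 < x := by linarith
  have hbase : max (s + d + n * c) 0 ≤ x + (d + |c|) :=
    max_le (by rw [hx]; linarith [neg_abs_le c]) (by positivity)
  have hpow : (x + (d + |c|)) ^ n ≤ x ^ n * Real.exp 1 := by
    have h₁ : x + (d + |c|) ≤ x * Real.exp ((d + |c|) / x) := by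
      have := Real.add_one_le_exp ((d + |c|) / x)
      calc x + (d + |c|) = x * ((d + |c|) / x + 1) := by field_simp; ring
        _ ≤ _ := by gcongr
    calc (x + (d + |c|)) ^ n ≤ (x * Real.exp ((d + |c|) / x)) ^ n := by gcongr
      _ = x ^ n * Real.exp (n * ((d + |c|) / x)) := by rw [mul_pow, ← Real.exp_nat_mul]
      _ ≤ x ^ n * Real.exp 1 := by
        gcongr
        rw [← mul_div_assoc, div_le_one hx0]
        have : (n : ℝ) * (d + |c|) ≤ N * (d + |c|) := by gcongr; linarith
        linarith
  have hratio : ((n : ℝ) + 1) / x ≤ 2 * (N / T) := by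
    rw [div_le_iff₀ hx0]
    calc (n : ℝ) + 1 ≤ N := hnN
      _ = 2 * (N / T) * (T / 2) := by field_simp
      _ ≤ _ := by gcongr
  calc shiftedPower a c n (s + d)
      ≤ a ^ n / n.factorial * (x ^ n * Real.exp 1) := by
        unfold shiftedPower
        gcongr
        exact (pow_le_pow_left₀ (le_max_right _ _) hbase n).trans hpow
    _ = (n + 1) / x * (Real.exp 1 / a * (a ^ (n + 1) / (n + 1).factorial * x ^ (n + 1))) := by
        rw [Nat.factorial_succ]
        push_cast
        field_simp
        ring
    _ ≤ 2 * (N / T) * (Real.exp 1 / a * (a ^ (n + 1) / (n + 1).factorial * x ^ (n + 1))) := by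
        gcongr
    _ = _ := by
        unfold shiftedPower
        push_cast
        rw [← hx, max_eq_left hx0.le]
        ring

theorem tendsto_div_of_isLittleO_rpow {j : ℝ → ℕ}
    (hjo : (fun t : ℝ => (j t : ℝ)) =o[atTop] fun t : ℝ => t ^ ((2 : ℝ) / 3)) :
    Tendsto (fun t => (j t : ℝ) / t) atTop (𝓝 0) ∧
      Tendsto (fun t => (j t : ℝ) ^ 3 / t ^ 2) atTop (𝓝 0) := by
  have h := hjo.tendsto_div_nhds_zero
  constructor
  · have h₁ : Tendsto (fun t : ℝ => t ^ (-((1 : ℝ) / 3))) atTop (𝓝 0) :=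
      tendsto_rpow_neg_atTop (by norm_num)
    have h₂ := h.mul h₁
    rw [mul_zero] at h₂
    refine h₂.congr' ?_
    filter_upwards [eventually_gt_atTop 0] with t ht
    rw [div_mul_eq_mul_div, div_eq_div_iff (by positivity) ht.ne', mul_assoc]
    congr 1
    nth_rewrite 2 [← Real.rpow_one t]
    rw [← Real.rpow_add ht]
    norm_num
  · have h₂ := h.pow 3
    rw [zero_pow (by norm_num)] at h₂
    refine h₂.congr' ?_
    filter_upwards [eventually_gt_atTop 0] with t ht
    rw [div_pow, ← Real.rpow_mul_natCast ht.le]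
    norm_num

theorem tendsto_shiftedPower_div {a γ : ℝ} (ha : 0 < a) {j : ℝ → ℕ}
    (h₁ : Tendsto (fun t => (j t : ℝ) / t) atTop (𝓝 0))
    (h₃ : Tendsto (fun t => (j t : ℝ) ^ 3 / t ^ 2) atTop (𝓝 0)) :
    Tendsto (fun t => shiftedPower a (γ / a) (j t) t /
      (a ^ j t * t ^ j t / (Nat.factorial (j t) : ℝ) * Real.exp (γ * (j t : ℝ) ^ 2 / (a * t))))
      atTop (𝓝 1) := by
  set c := γ / a with hc
  have hx : Tendsto (fun t => (j t : ℝ) / t * c) atTop (𝓝 0) := by simpa using h₁.mul_const c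
  have hlog : Tendsto
      (fun t => (j t : ℝ) * (Real.log (1 + j t / t * c) - j t / t * c)) atTop (𝓝 0) := by
    have hbd : Tendsto (fun t => 2 * c ^ 2 * ((j t : ℝ) ^ 3 / t ^ 2)) atTop (𝓝 0) := by
      simpa using h₃.const_mul (2 * c ^ 2)
    refine squeeze_zero_norm' ?_ hbd
    filter_upwards [hx.eventually (Metric.ball_mem_nhds 0 (by norm_num : (0 : ℝ) < 1 / 2)),
      eventually_gt_atTop 0] with t ht ht0
    set x := (j t : ℝ) / t * c
    have hxa : |x| < 1 / 2 := by simpa using ht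
    have h := Real.abs_log_sub_add_sum_range_le (x := -x) (by rw [abs_neg]; linarith) 1
    simp only [Finset.sum_range_one, abs_neg, sub_neg_eq_add] at h
    norm_num at h
    have hle : |Real.log (1 + x) - x| ≤ 2 * x ^ 2 := by
      rw [show Real.log (1 + x) - x = -x + Real.log (1 + x) by ring]
      refine h.trans ?_
      rw [div_le_iff₀ (by linarith)]
      nlinarith [sq_nonneg x]
    rw [norm_mul, Real.norm_natCast, Real.norm_eq_abs]
    calc (j t : ℝ) * |Real.log (1 + x) - x| ≤ j t * (2 * x ^ 2) := by gcongr
      _ = _ := by simp only [x]; field_simp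
  have hexp := (Real.continuous_exp.tendsto 0).comp hlog
  rw [Real.exp_zero] at hexp
  refine hexp.congr' ?_
  filter_upwards [hx.eventually (Metric.ball_mem_nhds 0 (by norm_num : (0 : ℝ) < 1 / 2)),
    eventually_gt_atTop 0] with t ht ht0
  have hxa : |(j t : ℝ) / t * c| < 1 / 2 := by rwa [dist_zero_right, Real.norm_eq_abs] at ht
  have hpos : 0 < 1 + (j t : ℝ) / t * c := by linarith [(abs_lt.1 hxa).1]
  have hfac : t + j t * c = t * (1 + j t / t * c) := by field_simp
  have hγ : γ * (j t : ℝ) ^ 2 / (a * t) = j t * (j t / t * c) := by rw [hc]; field_simp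
  rw [shiftedPower, hfac, max_eq_left (by positivity), mul_pow, hγ, Function.comp_apply, mul_sub,
    Real.exp_sub, Real.exp_nat_mul, Real.exp_log hpos]
  field_simp


/-- **Proposition 3.4.** Let `f` be nondecreasing, right-continuous, vanishing on the
negative half-line, with `ε(t) = f(t) - a t` satisfying `∫_{[0,∞)} y |dε(y)| < ∞`;
this is encoded by a Jordan-type decomposition `dε = dρ₁ - dρ₂` of the
Lebesgue–Stieltjes measure of `f`, with finite measures `ρ₁, ρ₂` carried by `[0,∞)`
having finite first moments. Then `γ₀ = lim (f(t) - a t)` exists in `ℝ` and for any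
integer-valued `j = j(t) ≥ 1` with `j(t) = o(t^{2/3})`,
`f^{∗(j(t))}(t) ~ (a^{j(t)} t^{j(t)} / j(t)!) exp(γ₀ j(t)²/(a t))` as `t → ∞`. -/
theorem convolution_powers_finite_total_variation
    (f : ℝ → ℝ) (hf0 : ∀ t, 0 ≤ f t) (hmono : Monotone f)
    (hrc : ∀ x, ContinuousWithinAt f (Ici x) x)
    (hneg : ∀ t < (0 : ℝ), f t = 0)
    (a : ℝ) (ha : 0 < a)
    (hvar : ∃ ρ₁ ρ₂ : Measure ℝ, IsFiniteMeasure ρ₁ ∧ IsFiniteMeasure ρ₂ ∧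
      ρ₁ (Iio 0) = 0 ∧ ρ₂ (Iio 0) = 0 ∧
      lsMeasure f + ρ₂ = ρ₁ + ENNReal.ofReal a • volume.restrict (Ioi 0) ∧
      (∫⁻ y, ENNReal.ofReal y ∂ρ₁) < ⊤ ∧ (∫⁻ y, ENNReal.ofReal y ∂ρ₂) < ⊤)
    (j : ℝ → ℕ) (hj1 : ∀ t, 1 ≤ j t)
    (hjo : (fun t : ℝ => (j t : ℝ)) =o[atTop] fun t : ℝ => t ^ ((2 : ℝ) / 3)) :
    ∃ γ₀ : ℝ,
      Tendsto (fun t : ℝ => f t - a * t) atTop (𝓝 γ₀) ∧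
      Tendsto
        (fun t : ℝ =>
          convPowFun f (j t) t /
            (a ^ j t * t ^ j t / (Nat.factorial (j t) : ℝ) *
              Real.exp (γ₀ * (j t : ℝ) ^ 2 / (a * t))))
        atTop (𝓝 1) := by
  obtain ⟨ρ₁, ρ₂, hρ₁f, hρ₂f, -, -, hρ, hρ₁, hρ₂⟩ := hvar
  obtain ⟨γ₀, hlim, ⟨V, hV⟩, hI⟩ := exists_tendsto_sub_linear_and_integrable_remainder
    f hf0 hmono hrc hneg a ha ρ₁ ρ₂ hρ hρ₁ hρ₂
  refine ⟨γ₀, hlim, ?_⟩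
  obtain ⟨K, W, d, hK, hW, hd, hmix, hlast⟩ := exists_mixedDist_exchange_bounds ha.le hf0
    (lsMeasure_Iic hmono hrc hneg) hneg hV hI
  obtain ⟨hj₁, hj₃⟩ := tendsto_div_of_isLittleO_rpow hjo
  set c := γ₀ / a with hc
  set B := 2 * Real.exp 1 / a with hB
  set q : ℝ → ℝ := fun t =>
    2 * K * (B * (j t / t)) ^ 2 * j t + 2 * W * (B * (j t / t)) with hq
  have hq0 : Tendsto q atTop (𝓝 0) := by
    have h := (hj₃.const_mul (2 * K * B ^ 2)).add (hj₁.const_mul (2 * W * B))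
    rw [mul_zero, mul_zero, add_zero] at h
    refine h.congr fun t => ?_
    simp only [hq]
    ring
  have hsmall : ∀ᶠ t in atTop, 2 * (j t : ℝ) * (d + |c|) ≤ t := by
    have h := hj₁.const_mul (2 * (d + |c|))
    rw [mul_zero] at h
    filter_upwards [h.eventually_le_const one_pos, eventually_gt_atTop 0] with t ht ht0
    rw [← mul_div_assoc, div_le_one ht0] at ht
    linarith
  have hzero : ∀ m s, 0 ≤ s →
      (mixedDist (lsMeasure f) (halfLineMeasure a c) 0 m s).toReal = shiftedPower a c m s := by
    rintro (_ | m) s hs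
    · rw [mixedDist_zero_left, convPow, Measure.dirac_apply' _ measurableSet_Iic,
        indicator_of_mem (mem_Iic.2 hs)]
      simp [shiftedPower]
    · rw [mixedDist_zero_left, convPow_halfLineMeasure_Iic ha.le,
        ENNReal.toReal_ofReal (by positivity), shiftedPower]
  have hclose : ∀ᶠ t in atTop,
      |convPowFun f (j t) t - shiftedPower a c (j t) t| ≤ q t * shiftedPower a c (j t) t := by
    filter_upwards [hsmall, eventually_gt_atTop 0, hq0.eventually_le_const one_pos]
      with t ht ht0 hq1
    have h := abs_mixed_sub_le_of_exchange_bounds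
      (g := fun i m s => (mixedDist (lsMeasure f) (halfLineMeasure a c) i m s).toReal) hK hW hd (b := B * (j t / t)) (by positivity)
      hmix hlast (fun m s hs => hzero m s (ht0.le.trans hs)) (shiftedPower_nonneg ha.le c)
      (fun n s _ => shiftedPower_mono ha.le c n (by linarith))
      (shiftedPower_add_le ha hd ht0 ht) le_rfl hq1 (j t) le_rfl (j t) 0 rfl t le_rfl
    simp only [mixedDist_zero_right] at h
    exact h
  have hpos : ∀ᶠ t in atTop, 0 < shiftedPower a c (j t) t := by
    filter_upwards [hsmall, eventually_gt_atTop 0] with t ht ht0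
    have h₁ : -((j t : ℝ) * |c|) ≤ j t * c := by
      rw [← mul_neg]
      gcongr
      exact neg_abs_le c
    have h₂ : (0 : ℝ) ≤ j t * d := by positivity
    have h₃ : 0 < t + j t * c := by nlinarith
    rw [shiftedPower, max_eq_left h₃.le]
    positivity
  have hratio : Tendsto (fun t => convPowFun f (j t) t / shiftedPower a c (j t) t)
      atTop (𝓝 1) := by
    rw [tendsto_iff_norm_sub_tendsto_zero]
    refine squeeze_zero' (Eventually.of_forall fun t => norm_nonneg _) ?_ hq0
    filter_upwards [hclose, hpos] with t ht hp
    rw [div_sub_one hp.ne', norm_div, Real.norm_eq_abs, Real.norm_of_nonneg hp.le,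
      div_le_iff₀ hp]
    exact ht
  have h := hratio.mul (tendsto_shiftedPower_div (γ := γ₀) ha hj₁ hj₃)
  rw [one_mul] at h
  refine h.congr' ?_
  filter_upwards [hpos] with t hp
  rw [div_mul_div_cancel₀ hp.ne']

end
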